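/- For every unit spinor φ ∈ Δ, the eight vectors (φ, j(φ), e_1(φ), e_2(φ), e_3(φ), e_4(φ), e_5(φ), e_6(φ)) form an orthonormal basis of ℝ^8. In particular Δ decomposes as the orthogonal direct sum Δ = ℝφ ⊕ ℝ·j(φ) ⊕ {x·φ : x ∈ ℝ^6}. -/

import Mathlib

open RealInnerProductSpace

noncomputable section

/-- The spin representation space Δ = ℝ^8. -/
abbrev Δ : Type := EuclideanSpace ℝ (Fin 8)

/-- The standard skew endomorphism E_{ij} of ℝ^8: u_i ↦ u_j, u_j ↦ -u_i, others ↦ 0. -/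
def E (i j : Fin 8) : Δ →ₗ[ℝ] Δ where
  toFun v := v i • EuclideanSpace.single j (1 : ℝ) - v j • EuclideanSpace.single i (1 : ℝ)
  map_add' x y := by
    simp only [PiLp.add_apply, add_smul]
    module
  map_smul' c x := by
    simp only [PiLp.smul_apply, smul_eq_mul, RingHom.id_apply, mul_smul]
    module

/-- The seven Clifford endomorphisms e_1, …, e_7 (indexed 0,…,6). -/
def cliff : Fin 7 → (Δ →ₗ[ℝ] Δ) :=
  ![  E 0 7 + E 1 6 - E 2 5 - E 3 4,
    - E 0 6 + E 1 7 + E 2 4 - E 3 5,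
    - E 0 5 + E 1 4 - E 2 7 + E 3 6,
    - E 0 4 - E 1 5 - E 2 6 - E 3 7,
    - E 0 2 - E 1 3 + E 4 6 + E 5 7,
      E 0 3 - E 1 2 - E 4 7 + E 5 6,
      E 0 1 - E 2 3 - E 4 5 + E 6 7]

/-- j = e_1 ∘ e_2 ∘ e_3 ∘ e_4 ∘ e_5 ∘ e_6. -/
def jmap : Δ →ₗ[ℝ] Δ :=
  cliff 0 ∘ₗ cliff 1 ∘ₗ cliff 2 ∘ₗ cliff 3 ∘ₗ cliff 4 ∘ₗ cliff 5

/-- Clifford multiplication of a vector x ∈ ℝ^6 on a spinor. -/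
def cm6 (x : EuclideanSpace ℝ (Fin 6)) (φ : Δ) : Δ :=
  ∑ i : Fin 6, x i • cliff i.castSucc φ

/-- Clifford multiplication of a vector x ∈ ℝ^7 on a spinor. -/
def cm7 (x : EuclideanSpace ℝ (Fin 7)) (φ : Δ) : Δ :=
  ∑ i : Fin 7, x i • cliff i φ

/-!
The operators `e₁, …, e₇` are skew-adjoint, square to `-1` and anticommute pairwise, so for a unit
spinor `φ` the vectors `φ, e₁φ, …, e₇φ` are orthonormal: `⟪φ, eᵢφ⟫` vanishes by skewness, and
`⟪eᵢφ, eₖφ⟫ = -⟪φ, eᵢeₖφ⟫` is both symmetric and antisymmetric in `i ≠ k`. Since `j = -e₇`, the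
vectors `φ, jφ, e₁φ, …, e₆φ` are these up to order and sign, and eight orthonormal vectors span
`ℝ⁸`.

The Clifford relations reduce to a finite check on signs, because each `eᵢ` permutes the coordinates
of a spinor up to sign, and the permutation is a bitwise translation `k ↦ k ^^^ m` of `{0, …, 7}`.
-/

/-- A family of skew-adjoint operators on a real inner product space which square to `-1` and
anticommute pairwise, i.e. an orthogonal representation of a negative definite Clifford algebra
given on an orthonormal basis of generators. -/
structure IsCliffordFamily {ι V : Type*} [NormedAddCommGroup V] [InnerProductSpace ℝ V]
    (J : ι → V →ₗ[ℝ] V) : Prop where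
  inner_left (i : ι) (x y : V) : ⟪J i x, y⟫ = -⟪x, J i y⟫
  apply_apply (i : ι) (x : V) : J i (J i x) = -x
  anticomm {i k : ι} (hik : i ≠ k) (x : V) : J i (J k x) = -J k (J i x)

namespace IsCliffordFamily

variable {ι V : Type*} [NormedAddCommGroup V] [InnerProductSpace ℝ V] {J : ι → V →ₗ[ℝ] V}

theorem inner_apply_right_eq_zero (hJ : IsCliffordFamily J) (i : ι) (x : V) :
    ⟪x, J i x⟫ = 0 := by
  have hskew := hJ.inner_left i x x
  rw [real_inner_comm] at hskew
  linarith

theorem norm_apply (hJ : IsCliffordFamily J) (i : ι) (x : V) : ‖J i x‖ = ‖x‖ := by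
  have hinner : ⟪J i x, J i x⟫ = ⟪x, x⟫ := by
    rw [hJ.inner_left, hJ.apply_apply, inner_neg_right, neg_neg]
  rw [norm_eq_sqrt_real_inner, hinner, ← norm_eq_sqrt_real_inner]

theorem inner_apply_apply_eq_zero (hJ : IsCliffordFamily J) {i k : ι} (hik : i ≠ k) (x : V) :
    ⟪J i x, J k x⟫ = 0 := by
  have hantisymm : ⟪J i x, J k x⟫ = -⟪J i x, J k x⟫ :=
    calc ⟪J i x, J k x⟫ = -⟪x, J i (J k x)⟫ := hJ.inner_left i x (J k x)
      _ = ⟪x, J k (J i x)⟫ := by rw [hJ.anticomm hik, inner_neg_right, neg_neg]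
      _ = -⟪J k x, J i x⟫ := by rw [hJ.inner_left, neg_neg]
      _ = -⟪J i x, J k x⟫ := by rw [real_inner_comm]
  linarith

theorem orthonormal_apply (hJ : IsCliffordFamily J) {x : V} (hx : ‖x‖ = 1) :
    Orthonormal ℝ fun i ↦ J i x :=
  ⟨fun i ↦ (hJ.norm_apply i x).trans hx, fun _ _ hik ↦ hJ.inner_apply_apply_eq_zero hik x⟩

theorem orthonormal_vecCons {n : ℕ} {J : Fin n → V →ₗ[ℝ] V} (hJ : IsCliffordFamily J) {x : V}
    (hx : ‖x‖ = 1) : Orthonormal ℝ (Matrix.vecCons x fun i ↦ J i x) :=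
  orthonormal_vecCons_iff.2
    ⟨hx, fun i ↦ hJ.inner_apply_right_eq_zero i x, hJ.orthonormal_apply hx⟩

end IsCliffordFamily

theorem E_apply (i k : Fin 8) (φ : Δ) (l : Fin 8) :
    E i k φ l = (if l = k then φ i else 0) - if l = i then φ k else 0 := by
  simp [E]

theorem inner_E_left (i k : Fin 8) (φ ψ : Δ) : ⟪E i k φ, ψ⟫ = -⟪φ, E i k ψ⟫ := by
  simp only [E, LinearMap.coe_mk, AddHom.coe_mk, inner_sub_left, inner_sub_right,
    real_inner_smul_left, real_inner_smul_right, EuclideanSpace.inner_single_left,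
    EuclideanSpace.inner_single_right, map_one, conj_trivial]
  ring

theorem inner_cliff_left (i : Fin 7) (φ ψ : Δ) : ⟪cliff i φ, ψ⟫ = -⟪φ, cliff i ψ⟫ := by
  fin_cases i <;>
  · simp only [cliff, Fin.reduceFinMk, Matrix.cons_val, LinearMap.add_apply, LinearMap.sub_apply,
      LinearMap.neg_apply, inner_add_left, inner_add_right, inner_sub_left, inner_sub_right,
      inner_neg_left, inner_neg_right, inner_E_left]
    ring

/-- The translation `k ↦ k ^^^ cliffMask i` is the permutation of coordinates underlying the
Clifford endomorphism `cliff i`. -/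
def cliffMask : Fin 7 → Fin 8 := ![7, 6, 5, 4, 2, 3, 1]

/-- `cliffSign i k` is the sign with which the Clifford endomorphism `cliff i` moves coordinate
`k ^^^ cliffMask i` of a spinor to coordinate `k`. -/
def cliffSign : Fin 7 → Fin 8 → ℤ :=
  ![![-1, -1,  1,  1, -1, -1,  1,  1],
    ![ 1, -1, -1,  1,  1, -1, -1,  1],
    ![ 1, -1,  1, -1,  1, -1,  1, -1],
    ![ 1,  1,  1,  1, -1, -1, -1, -1],
    ![ 1,  1, -1, -1, -1, -1,  1,  1],
    ![-1,  1, -1,  1,  1, -1,  1, -1],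
    ![-1,  1,  1, -1,  1, -1, -1,  1]]

theorem cliff_apply (i : Fin 7) (φ : Δ) (k : Fin 8) :
    cliff i φ k = cliffSign i k • φ (k ^^^ cliffMask i) := by
  fin_cases i <;> fin_cases k <;> simp [cliff, E_apply, cliffSign, cliffMask]

theorem cliff_cliff_apply (i k : Fin 7) (φ : Δ) (l : Fin 8) :
    cliff i (cliff k φ) l =
      (cliffSign i l * cliffSign k (l ^^^ cliffMask i)) •
        φ (l ^^^ cliffMask i ^^^ cliffMask k) := by
  rw [cliff_apply, cliff_apply, mul_smul]

theorem cliffSign_mul_cliffSign_xor_self :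
    ∀ i l, cliffSign i l * cliffSign i (l ^^^ cliffMask i) = -1 := by
  decide

theorem cliffSign_mul_cliffSign_xor_of_ne : ∀ i k, i ≠ k → ∀ l,
    cliffSign i l * cliffSign k (l ^^^ cliffMask i) =
      -(cliffSign k l * cliffSign i (l ^^^ cliffMask k)) := by
  decide

theorem fin_eight_xor_xor_cancel_right : ∀ l m : Fin 8, l ^^^ m ^^^ m = l := by
  decide

theorem fin_eight_xor_right_comm : ∀ l m n : Fin 8, l ^^^ m ^^^ n = l ^^^ n ^^^ m := by
  decide

theorem isCliffordFamily_cliff : IsCliffordFamily cliff where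
  inner_left := inner_cliff_left
  apply_apply i φ := by
    ext l
    rw [cliff_cliff_apply, cliffSign_mul_cliffSign_xor_self, fin_eight_xor_xor_cancel_right,
      neg_one_smul, PiLp.neg_apply]
  anticomm {i k} hik φ := by
    ext l
    rw [PiLp.neg_apply, cliff_cliff_apply, cliff_cliff_apply,
      cliffSign_mul_cliffSign_xor_of_ne i k hik, fin_eight_xor_right_comm, neg_smul]

theorem jmap_eq_neg_cliff_six : jmap = -cliff 6 := by
  ext φ l
  simp only [jmap, LinearMap.comp_apply, LinearMap.neg_apply, PiLp.neg_apply, cliff_apply]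
  fin_cases l <;> simp [cliffSign, cliffMask]

/-- For every unit spinor φ, the eight vectors
(φ, j(φ), e_1(φ), …, e_6(φ)) form an orthonormal basis of ℝ^8. -/
theorem orthonormal_basis_from_unit_spinor_dim6 (φ : Δ) (hφ : ⟪φ, φ⟫ = 1) :
    Orthonormal ℝ
      ![φ, jmap φ, cliff 0 φ, cliff 1 φ, cliff 2 φ, cliff 3 φ, cliff 4 φ, cliff 5 φ] ∧
    Submodule.span ℝ
      (Set.range
        ![φ, jmap φ, cliff 0 φ, cliff 1 φ, cliff 2 φ, cliff 3 φ, cliff 4 φ, cliff 5 φ]) = ⊤ := by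
  have hnorm : ‖φ‖ = 1 := by rw [norm_eq_sqrt_real_inner, hφ, Real.sqrt_one]
  have hcliff : Orthonormal ℝ (Matrix.vecCons φ fun i ↦ cliff i φ) :=
    isCliffordFamily_cliff.orthonormal_vecCons hnorm
  have hperm : Orthonormal ℝ
      ![φ, cliff 6 φ, cliff 0 φ, cliff 1 φ, cliff 2 φ, cliff 3 φ, cliff 4 φ, cliff 5 φ] := by
    convert hcliff.comp ![0, 7, 1, 2, 3, 4, 5, 6] (by decide) using 1
    ext1 i
    fin_cases i <;> rfl
  have hsign : Orthonormal ℝ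
      ![φ, jmap φ, cliff 0 φ, cliff 1 φ, cliff 2 φ, cliff 3 φ, cliff 4 φ, cliff 5 φ] := by
    refine hperm.orthonormal_of_forall_eq_or_eq_neg fun i ↦ ?_
    rw [jmap_eq_neg_cliff_six]
    fin_cases i <;> simp
  exact ⟨hsign, hsign.linearIndependent.span_eq_top_of_card_eq_finrank (by simp)⟩

end
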